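/- arXiv:1707.07303 — 2 statements merged into one kernel-verified Lean document; each statement's English description precedes it below -/
import Mathlib

section
/- Let S be a matroid polytope subdivision of a matroid polytope Q ⊆ ℝ^{n+1}, let v ∈ ℝ^{n+1} be a fixed nonzero vector, and let F_0 be a face of S. Define the function j on faces of S by j(F) = 1 if face_v(F) ⊇ F_0 and j(F) = 0 otherwise. Then ∑_{F} (−1)^{dim(Q)−dim(F)} j(F), where F ranges over the interior faces of S, equals 1 if F_0 ⊆ face_v(Q), and equals 0 otherwise. -/
open Matroid Set

/-- The Möbius function of a collection of "flats" (finsets), defined recursively: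
`mob flats F G = 0` if `F ⊄ G`, `1` if `F = G`, and `-∑_{F ⊆ G' ⊊ G} mob flats F G'` otherwise,
the sum being over members `G'` of `flats`. -/
noncomputable def mob {α : Type*} [DecidableEq α] (flats : Finset (Finset α)) :
    Finset α → Finset α → ℤ
  | F, G =>
    if F ⊆ G then
      if F = G then 1
      else - ∑ G' ∈ (flats.filter fun G' => F ⊆ G' ∧ G' ⊂ G).attach,
        mob flats F G'.1
    else 0
termination_by F G => G.card
decreasing_by
  exact Finset.card_lt_card (Finset.mem_filter.mp G'.2).2.2

/-- The rank of a set `X` in a matroid `M`: the largest cardinality of an independent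
subset of `X`. -/
noncomputable def rk {α : Type*} (M : Matroid α) (X : Set α) : ℕ :=
  sSup (Set.ncard '' {I | M.Indep I ∧ I ⊆ X})

/-- An element `e` is a loop of `M` if it belongs to the ground set but to no base. -/
def mLoop {α : Type*} (M : Matroid α) (e : α) : Prop :=
  e ∈ M.E ∧ ∀ B, M.IsBase B → e ∉ B

/-- An element `e` is a coloop of `M` if it belongs to every base. -/
def mColoop {α : Type*} (M : Matroid α) (e : α) : Prop :=
  ∀ B, M.IsBase B → e ∈ B

/-- A matroid is loopless if it has no loops. -/
def mLoopless {α : Type*} (M : Matroid α) : Prop := ∀ e, ¬ mLoop M e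

/-- Contraction of a set `C` in a matroid `M`, defined by duality:
`M / C = (M✶ \ C)✶`, where deletion is restriction to the complement. -/
noncomputable def mContr {α : Type*} (M : Matroid α) (C : Set α) : Matroid α :=
  (M✶ ↾ (M✶.E \ C))✶

/-- The minor `M|G/F` of `M` obtained by restricting to `G` and contracting `F`. -/
noncomputable def mMinor {α : Type*} (M : Matroid α) (G F : Set α) : Matroid α :=
  mContr (M ↾ G) F

open Classical in
/-- The finset of all flats of a matroid on `Fin m`, as finsets. -/
noncomputable def flatsF {m : ℕ} (M : Matroid (Fin m)) : Finset (Finset (Fin m)) :=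
  Finset.univ.filter fun F => M.IsFlat ↑F

open Classical in
/-- The beta invariant `β(M) = (-1)^{r(M)} ∑_{F ∈ L(M)} μ(∅,F) r(F)` of a loopless
matroid `M`; it is `0` if `M` has a loop. -/
noncomputable def betaInv {m : ℕ} (M : Matroid (Fin m)) : ℤ :=
  if mLoopless M then
    (-1) ^ (rk M M.E) * ∑ F ∈ flatsF M, mob (flatsF M) ∅ F * (rk M ↑F : ℤ)
  else 0

/-- The 0/1 indicator vector of a finset `S ⊆ {0,…,m-1}`, as a vector in `ℝ^m`. -/
def eVec {m : ℕ} (S : Finset (Fin m)) : Fin m → ℝ := fun i => if i ∈ S then 1 else 0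

/-- The dot product of two vectors in `ℝ^m`. -/
def dotp {m : ℕ} (v x : Fin m → ℝ) : ℝ := ∑ i, x i * v i

/-- The face of a set `Q ⊆ ℝ^m` maximizing the dot product with `v`. -/
def faceV {m : ℕ} (v : Fin m → ℝ) (Q : Set (Fin m → ℝ)) : Set (Fin m → ℝ) :=
  {x ∈ Q | ∀ y ∈ Q, dotp v y ≤ dotp v x}

/-- The matroid polytope `Q(M)` of a matroid `M` on `{0,…,m-1}`: the convex hull of the
indicator vectors of the bases of `M`. -/
noncomputable def mPoly {m : ℕ} (M : Matroid (Fin m)) : Set (Fin m → ℝ) :=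
  convexHull ℝ {x | ∃ B : Finset (Fin m), M.IsBase ↑B ∧ x = eVec B}

/-- A polytope in `ℝ^m`: the convex hull of a finite set of points. -/
def IsPolytope {m : ℕ} (P : Set (Fin m → ℝ)) : Prop :=
  ∃ V : Finset (Fin m → ℝ), P = convexHull ℝ ↑V

/-- `F` is a face of `Q ⊆ ℝ^m` if it is the maximizing set of some linear functional
`x ↦ x·v` on `Q`.  (Taking `v = 0` shows `Q` is a face of itself.) -/
def IsFaceOf {m : ℕ} (Q F : Set (Fin m → ℝ)) : Prop := ∃ v, F = faceV v Q

/-- The dimension of a subset of `ℝ^m`: the dimension of its affine hull. -/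
noncomputable def pdim {m : ℕ} (P : Set (Fin m → ℝ)) : ℕ :=
  Module.finrank ℝ (vectorSpan ℝ P)

/-- `S` is a subdivision of the polytope `Q`: a finite collection of polytopes of the same
dimension as `Q` whose vertices are vertices of `Q`, whose union is `Q`, and in which any
two distinct cells meet (if at all) in a proper face of both. -/
structure IsSubdivision {m : ℕ} (S : Finset (Set (Fin m → ℝ))) (Q : Set (Fin m → ℝ)) :
    Prop where
  poly : ∀ P ∈ S, IsPolytope P
  dim_eq : ∀ P ∈ S, pdim P = pdim Q
  vertices_subset : ∀ P ∈ S, Set.extremePoints ℝ P ⊆ Set.extremePoints ℝ Q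
  cover : ⋃₀ ↑S = Q
  inter_face : ∀ P ∈ S, ∀ P' ∈ S, P ≠ P' → (P ∩ P').Nonempty →
    IsFaceOf P (P ∩ P') ∧ P ∩ P' ≠ P ∧ IsFaceOf P' (P ∩ P') ∧ P ∩ P' ≠ P'

/-- A face of a subdivision `S` is a face of one of its cells. -/
def IsFaceOfSubdivision {m : ℕ} (S : Finset (Set (Fin m → ℝ))) (F : Set (Fin m → ℝ)) :
    Prop := ∃ P ∈ S, IsFaceOf P F

/-- An interior face of a subdivision `S` of `Q` is a face of `S` that is not contained in
the relative boundary of `Q`. -/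
def IsInteriorFace {m : ℕ} (S : Finset (Set (Fin m → ℝ))) (Q F : Set (Fin m → ℝ)) : Prop :=
  IsFaceOfSubdivision S F ∧ ¬ F ⊆ intrinsicFrontier ℝ Q

/-- A matroid polytope subdivision: a subdivision all of whose cells are matroid
polytopes. -/
def IsMatroidSubdivision {m : ℕ} (S : Finset (Set (Fin m → ℝ))) (Q : Set (Fin m → ℝ)) :
    Prop :=
  IsSubdivision S Q ∧ ∀ P ∈ S, ∃ M' : Matroid (Fin m), P = mPoly M'

/-! The relative interiors of the interior faces partition the relative interior of `Q`, and the
compactly supported Euler characteristic of a bounded relatively open convex set `U`, which is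
`(-1) ^ dim U` if `U` is nonempty and `0` otherwise, is additive over such partitions.

Choose `x` in the relative interior of `F₀`, so that `F₀ ⊆ face_v(F)` if and only if `x ∈
face_v(F)`. Inside a small ball `N` around `x`, a face `F` containing `x` contributes `(-1) ^ dim
F` to the Euler characteristic of the partition. Inside the half-ball `N ∩ {y | y·v > x·v}` it
contributes the same amount, unless `x` maximizes `v` on `F`, in which case it contributes nothing.
Subtracting the two counts leaves the signed sum over the interior faces `F` with `x ∈ face_v(F)`,
and the same subtraction performed on `Q` itself evaluates it. -/

section RelativeInterior

variable {E : Type*} [NormedAddCommGroup E] [NormedSpace ℝ E] {s t : Set E} {x y : E}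

/-- The isometric parametrization `d ↦ d + p` of the affine span of `s` by its direction. It turns
the relative interior of `s` into an ordinary interior. -/
noncomputable def affineSpanChart (p : affineSpan ℝ s) :
    (affineSpan ℝ s).direction →ᵃⁱ[ℝ] E :=
  haveI : Nonempty (affineSpan ℝ s) := ⟨p⟩
  (affineSpan ℝ s).subtypeₐᵢ.comp (AffineIsometryEquiv.vaddConst ℝ p).toAffineIsometry

lemma affineSpanChart_apply (p : affineSpan ℝ s) (d : (affineSpan ℝ s).direction) :
    affineSpanChart p d = d + p := rfl

lemma mem_range_affineSpanChart (p : affineSpan ℝ s) (hx : x ∈ s) :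
    x ∈ range (affineSpanChart p) :=
  ⟨⟨x - p, AffineSubspace.vsub_mem_direction (subset_affineSpan ℝ s hx) p.2⟩, by
    simp [affineSpanChart_apply]⟩

lemma intrinsicInterior_eq_image_affineSpanChart (p : affineSpan ℝ s) :
    intrinsicInterior ℝ s = affineSpanChart p '' interior (affineSpanChart p ⁻¹' s) := by
  have : Nonempty (affineSpan ℝ s) := ⟨p⟩
  let e := (AffineIsometryEquiv.vaddConst ℝ p).toHomeomorph
  have hchart : ⇑(affineSpanChart p) = (↑) ∘ e := rfl
  rw [hchart, preimage_comp, ← e.preimage_interior, image_comp, e.surjective.image_preimage,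
    intrinsicInterior]

lemma convex_preimage_affineSpanChart (hs : Convex ℝ s) (p : affineSpan ℝ s) :
    Convex ℝ (affineSpanChart p ⁻¹' s) :=
  hs.affine_preimage (affineSpanChart p).toAffineMap

lemma openSegment_subset_intrinsicInterior (hs : Convex ℝ s) (hx : x ∈ intrinsicInterior ℝ s)
    (hy : y ∈ s) : openSegment ℝ x y ⊆ intrinsicInterior ℝ s := by
  let p : affineSpan ℝ s := ⟨y, subset_affineSpan ℝ s hy⟩
  rw [intrinsicInterior_eq_image_affineSpanChart p] at hx ⊢
  obtain ⟨a, ha, rfl⟩ := hx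
  obtain ⟨b, hb⟩ := mem_range_affineSpanChart p hy
  rw [← hb, ← AffineIsometry.coe_toAffineMap, ← image_openSegment]
  exact image_mono ((convex_preimage_affineSpanChart hs p).openSegment_interior_self_subset_interior
    ha (hb.symm ▸ hy : affineSpanChart p b ∈ s))

lemma convex_intrinsicInterior (hs : Convex ℝ s) : Convex ℝ (intrinsicInterior ℝ s) :=
  convex_iff_openSegment_subset.2 fun _ ha _ hb =>
    openSegment_subset_intrinsicInterior hs ha (intrinsicInterior_subset hb)

lemma subset_closure_intrinsicInterior [FiniteDimensional ℝ E] (hs : Convex ℝ s) :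
    s ⊆ _root_.closure (intrinsicInterior ℝ s) := by
  intro y hy
  obtain ⟨x, hx⟩ := Set.Nonempty.intrinsicInterior hs ⟨y, hy⟩
  exact closure_mono (openSegment_subset_intrinsicInterior hs hx hy)
    (segment_subset_closure_openSegment (right_mem_segment ℝ x y))

lemma exists_mem_openSegment_of_mem_intrinsicInterior (hx : x ∈ intrinsicInterior ℝ s)
    (hy : y ∈ s) : ∃ z ∈ s, x ∈ openSegment ℝ y z := by
  let p : affineSpan ℝ s := ⟨y, subset_affineSpan ℝ s hy⟩
  rw [intrinsicInterior_eq_image_affineSpanChart p] at hx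
  obtain ⟨a, ha, rfl⟩ := hx
  have ha' : affineSpanChart p ⁻¹' s ∈ nhds ((1 : ℝ) • a) := by
    rwa [one_smul, ← mem_interior_iff_mem_nhds]
  have hcont : Continuous fun r : ℝ => r • a := by fun_prop
  have hlim : ∀ᶠ r : ℝ in nhdsWithin 1 (Ioi 1), r • a ∈ affineSpanChart p ⁻¹' s :=
    nhdsWithin_le_nhds (hcont.continuousAt ha')
  obtain ⟨r, hrs, hr : 1 < r⟩ := (hlim.and self_mem_nhdsWithin).exists
  have hr0 : 0 < r := one_pos.trans hr
  refine ⟨_, hrs, 1 - r⁻¹, r⁻¹, sub_pos.2 (inv_lt_one_of_one_lt₀ hr), inv_pos.2 hr0,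
    sub_add_cancel _ _, ?_⟩
  simp only [affineSpanChart_apply, Submodule.coe_smul, p]
  match_scalars <;> field_simp
  ring

lemma subset_of_isExtreme_of_mem_intrinsicInterior {A B : Set E} (hAB : IsExtreme ℝ A B)
    (hs : s ⊆ A) (hx : x ∈ intrinsicInterior ℝ s) (hxB : x ∈ B) : s ⊆ B := by
  intro y hy
  obtain ⟨z, hz, hxyz⟩ := exists_mem_openSegment_of_mem_intrinsicInterior hx hy
  exact hAB.left_mem_of_mem_openSegment (hs hy) (hs hz) hxB hxyz

lemma intrinsicInterior_subset_intrinsicInterior (ht : Convex ℝ t) (hst : s ⊆ t)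
    (hne : (s ∩ intrinsicInterior ℝ t).Nonempty) :
    intrinsicInterior ℝ s ⊆ intrinsicInterior ℝ t := by
  intro x hx
  obtain ⟨y, hys, hyt⟩ := hne
  obtain ⟨z, hz, hxyz⟩ := exists_mem_openSegment_of_mem_intrinsicInterior hx hys
  exact openSegment_subset_intrinsicInterior ht hyt (hst hz) hxyz

lemma exists_supporting_of_notMem_intrinsicInterior [FiniteDimensional ℝ E] (hs : Convex ℝ s)
    (hx : x ∈ s) (hxi : x ∉ intrinsicInterior ℝ s) :
    ∃ f : StrongDual ℝ E, (∀ y ∈ s, f y ≤ f x) ∧ ∃ y ∈ s, f y < f x := by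
  let p : affineSpan ℝ s := ⟨x, subset_affineSpan ℝ s hx⟩
  let T := affineSpanChart p ⁻¹' s
  have hT : Convex ℝ T := convex_preimage_affineSpanChart hs p
  have hint : (interior T).Nonempty := by
    rw [← image_nonempty (f := affineSpanChart p), ← intrinsicInterior_eq_image_affineSpanChart]
    exact Set.Nonempty.intrinsicInterior hs ⟨x, hx⟩
  have h0 : 0 ∉ interior T := fun h => hxi <| by
    rw [intrinsicInterior_eq_image_affineSpanChart p]
    exact ⟨0, h, by simp [affineSpanChart_apply, p]⟩
  obtain ⟨g, hg⟩ := geometric_hahn_banach_open_point hT.interior isOpen_interior h0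
  simp only [map_zero] at hg
  have hg' : ∀ d ∈ T, g d ≤ 0 := fun d hd => by
    have hd' : d ∈ _root_.closure (interior T) := by
      rw [hT.closure_interior_eq_closure_of_nonempty_interior hint]
      exact subset_closure hd
    exact closure_minimal (fun a ha => (hg a ha).le)
      (isClosed_le g.continuous continuous_const) hd'
  obtain ⟨f, hf, -⟩ := exists_extension_norm_eq _ g
  have hfg : ∀ d, f (affineSpanChart p d) = g d + f x := fun d => by
    simp [affineSpanChart_apply, hf, p]
  refine ⟨f, fun y hy => ?_, ?_⟩
  · obtain ⟨d, rfl⟩ := mem_range_affineSpanChart p hy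
    linarith [hfg d, hg' d hy]
  · obtain ⟨d, hd⟩ := hint
    exact ⟨affineSpanChart p d, interior_subset (s := T) hd, by linarith [hfg d, hg d hd]⟩

end RelativeInterior

section RelOpen

variable {E : Type*} [NormedAddCommGroup E] [NormedSpace ℝ E] {s O U : Set E}

lemma vectorSpan_inter_isOpen (A : AffineSubspace ℝ E) (hO : IsOpen O)
    (hne : ((A : Set E) ∩ O).Nonempty) : vectorSpan ℝ ((A : Set E) ∩ O) = A.direction := by
  refine le_antisymm (vectorSpan_mono ℝ inter_subset_left) fun d hd => ?_
  obtain ⟨x, hxA, hxO⟩ := hne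
  have hcont : Continuous fun ε : ℝ => ε • d + x := by fun_prop
  have hlim : ∀ᶠ ε in nhdsWithin (0 : ℝ) (Ioi 0), ε • d + x ∈ O :=
    nhdsWithin_le_nhds ((hO.preimage hcont).mem_nhds (by simpa using hxO))
  obtain ⟨ε, hεO, hε : 0 < ε⟩ := (hlim.and self_mem_nhdsWithin).exists
  have hεA : ε • d + x ∈ A :=
    AffineSubspace.vadd_mem_of_mem_direction (A.direction.smul_mem ε hd) hxA
  have hεd : ε • d ∈ vectorSpan ℝ ((A : Set E) ∩ O) := by
    simpa using vsub_mem_vectorSpan ℝ (s := (A : Set E) ∩ O) ⟨hεA, hεO⟩ ⟨hxA, hxO⟩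
  exact (Submodule.smul_mem_iff _ hε.ne').1 hεd

lemma inter_inter_preimage_singleton_eq (A : AffineSubspace ℝ E) (O : Set E)
    (f : StrongDual ℝ E) (x : E) : ((A : Set E) ∩ O) ∩ f ⁻¹' {f x}
      = ((A ⊓ AffineSubspace.mk' x (f : E →ₗ[ℝ] ℝ).ker : AffineSubspace ℝ E) : Set E) ∩ O := by
  ext y
  simp [AffineSubspace.mem_inf_iff, AffineSubspace.mem_mk', sub_eq_zero, and_right_comm]

/-- A relatively open set: the trace of an open set on an affine subspace. Unlike the condition
`intrinsicInterior ℝ U = U`, this form visibly passes to intersections. -/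
def IsRelOpen (U : Set E) : Prop :=
  ∃ (A : AffineSubspace ℝ E) (O : Set E), IsOpen O ∧ U = (A : Set E) ∩ O

lemma exists_isOpen_intrinsicInterior_eq (s : Set E) :
    ∃ O, IsOpen O ∧ intrinsicInterior ℝ s = (affineSpan ℝ s : Set E) ∩ O := by
  obtain ⟨O, hO, hOs⟩ := isOpen_induced_iff.1
    (isOpen_interior (s := ((↑) ⁻¹' s : Set (affineSpan ℝ s))))
  refine ⟨O, hO, ?_⟩
  rw [intrinsicInterior, ← hOs]
  exact Subtype.image_preimage_coe _ _

lemma isRelOpen_intrinsicInterior_inter (s : Set E) (hO : IsOpen O) :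
    IsRelOpen (intrinsicInterior ℝ s ∩ O) := by
  obtain ⟨O', hO', hs⟩ := exists_isOpen_intrinsicInterior_eq s
  exact ⟨affineSpan ℝ s, O' ∩ O, hO'.inter hO, by rw [hs, inter_assoc]⟩

lemma vectorSpan_intrinsicInterior_inter (hO : IsOpen O)
    (hne : (intrinsicInterior ℝ s ∩ O).Nonempty) :
    vectorSpan ℝ (intrinsicInterior ℝ s ∩ O) = vectorSpan ℝ s := by
  obtain ⟨O', hO', hs⟩ := exists_isOpen_intrinsicInterior_eq s
  rw [hs, inter_assoc] at hne ⊢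
  rw [vectorSpan_inter_isOpen _ (hO'.inter hO) hne, direction_affineSpan]

namespace IsRelOpen

lemma inter_preimage_singleton (hU : IsRelOpen U) (f : StrongDual ℝ E) (t : ℝ) :
    IsRelOpen (U ∩ f ⁻¹' {t}) := by
  obtain ⟨A, O, hO, rfl⟩ := hU
  rcases (((A : Set E) ∩ O) ∩ f ⁻¹' {t}).eq_empty_or_nonempty with h | ⟨x, -, rfl⟩
  · exact ⟨⊥, univ, isOpen_univ, by simpa using h⟩
  · exact ⟨_, O, hO, inter_inter_preimage_singleton_eq A O f x⟩

lemma vectorSpan_inter_preimage_singleton (hU : IsRelOpen U) (f : StrongDual ℝ E)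
    {x : E} (hx : x ∈ U) :
    vectorSpan ℝ (U ∩ f ⁻¹' {f x}) = vectorSpan ℝ U ⊓ (f : E →ₗ[ℝ] ℝ).ker := by
  obtain ⟨A, O, hO, rfl⟩ := hU
  have hslice := inter_inter_preimage_singleton_eq A O f x
  rw [hslice, vectorSpan_inter_isOpen _ hO (hslice ▸ ⟨x, hx, rfl⟩),
    vectorSpan_inter_isOpen _ hO ⟨x, hx⟩, AffineSubspace.direction_inf_of_mem hx.1
      (AffineSubspace.self_mem_mk' x _), AffineSubspace.direction_mk']

lemma isOpen_image (hU : IsRelOpen U) {f : StrongDual ℝ E}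
    (hf : ¬ vectorSpan ℝ U ≤ (f : E →ₗ[ℝ] ℝ).ker) : IsOpen (f '' U) := by
  refine isOpen_iff_mem_nhds.2 ?_
  rintro _ ⟨x, hx, rfl⟩
  obtain ⟨d, hd, hfd : f d ≠ 0⟩ := SetLike.not_le_iff_exists.1 hf
  obtain ⟨A, O, hO, rfl⟩ := hU
  rw [vectorSpan_inter_isOpen A hO ⟨x, hx⟩] at hd
  let γ : ℝ → E := fun u => ((u - f x) / f d) • d + x
  have hγ : Continuous γ := by fun_prop
  filter_upwards [(hO.preimage hγ).mem_nhds (by simpa [γ] using hx.2)] with u hu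
  exact ⟨γ u, ⟨AffineSubspace.vadd_mem_of_mem_direction (A.direction.smul_mem _ hd) hx.1, hu⟩,
    by simp [γ, hfd]⟩

end IsRelOpen

end RelOpen

section EulerCharacteristic

lemma eq_Ioo_csInf_csSup_of_isOpen {J : Set ℝ} (hJ : IsOpen J) (hconn : IsPreconnected J)
    (hb : Bornology.IsBounded J) : J = Ioo (sInf J) (sSup J) := by
  rcases J.eq_empty_or_nonempty with rfl | hne
  · simp
  · refine Subset.antisymm ?_
      (IsConnected.Ioo_csInf_csSup_subset ⟨hne, hconn⟩ hb.bddBelow hb.bddAbove)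
    rw [← interior_Icc, hJ.subset_interior_iff]
    exact subset_Icc_csInf_csSup hb.bddBelow hb.bddAbove

lemma eventually_nhdsGT_indicator_singleton_sub {R : Type*} [AddGroup R] (c : ℝ) (r : R) (t : ℝ) :
    ∀ᶠ u in nhdsWithin t (Ioi t), ({c} : Set ℝ).indicator (fun _ => r) t
      - ({c} : Set ℝ).indicator (fun _ => r) u = Pi.single (M := fun _ => R) c r t := by
  have hne : ∀ᶠ u in nhdsWithin t (Ioi t), u ≠ c := by
    rcases lt_or_ge t c with h | h
    · filter_upwards [Ioo_mem_nhdsGT h] with u hu using hu.2.ne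
    · filter_upwards [self_mem_nhdsWithin] with u hu using (h.trans_lt hu).ne'
  filter_upwards [hne] with u hu
  simp [indicator_apply, Pi.single_apply, hu]

lemma eventually_nhdsGT_indicator_Ioo_sub {R : Type*} [AddGroup R] {a b : ℝ} (hab : a < b) (r : R)
    (t : ℝ) : ∀ᶠ u in nhdsWithin t (Ioi t), (Ioo a b).indicator (fun _ => -r) t
      - (Ioo a b).indicator (fun _ => -r) u = Pi.single (M := fun _ => R) a r t := by
  rcases lt_trichotomy t a with h | rfl | h
  · filter_upwards [Ioo_mem_nhdsGT h] with u hu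
    simp [h.not_gt, hu.2.not_gt, h.ne]
  · filter_upwards [Ioo_mem_nhdsGT hab] with u hu
    simp [hu.1, hu.2]
  · rcases lt_or_ge t b with h' | h'
    · filter_upwards [Ioo_mem_nhdsGT h'] with u hu
      simp [h, h', hu.2, h.trans hu.1, h.ne']
    · filter_upwards [self_mem_nhdsWithin] with u (hu : t < u)
      simp [h'.not_gt, (h'.trans hu.le).not_gt, h.ne']

variable {E : Type*} [NormedAddCommGroup E] [NormedSpace ℝ E] {U : Set E}

open Classical in
/-- The Euler characteristic with compact support of a relatively open convex set. -/
noncomputable def eulerChar (U : Set E) : ℤ :=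
  if U.Nonempty then (-1) ^ Module.finrank ℝ (vectorSpan ℝ U) else 0

@[simp]
lemma eulerChar_empty : eulerChar (∅ : Set E) = 0 := by
  simp [eulerChar]

lemma eulerChar_of_nonempty (hU : U.Nonempty) :
    eulerChar U = (-1) ^ Module.finrank ℝ (vectorSpan ℝ U) :=
  if_pos hU

lemma eulerChar_eq_indicator_of_subset_singleton {y : E} (hU : U ⊆ {y}) :
    eulerChar U = U.indicator 1 y := by
  rcases subset_singleton_iff_eq.1 hU with rfl | rfl
  · simp
  · rw [eulerChar_of_nonempty (singleton_nonempty y), vectorSpan_singleton]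
    simp

lemma finrank_inf_ker_add_one [FiniteDimensional ℝ E] {W : Submodule ℝ E} {f : StrongDual ℝ E}
    (hf : ¬ W ≤ (f : E →ₗ[ℝ] ℝ).ker) :
    Module.finrank ℝ (W ⊓ (f : E →ₗ[ℝ] ℝ).ker : Submodule ℝ E) + 1 = Module.finrank ℝ W := by
  let g : Module.Dual ℝ W := (f : E →ₗ[ℝ] ℝ) ∘ₗ W.subtype
  have hg : g ≠ 0 := fun h => hf fun d hd => LinearMap.congr_fun h ⟨d, hd⟩
  rw [← Module.Dual.finrank_ker_add_one_of_ne_zero hg, LinearMap.ker_comp,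
    ← Submodule.map_comap_subtype, Submodule.finrank_map_subtype_eq]

lemma eulerChar_slice_of_le_ker {f : StrongDual ℝ E}
    (hf : vectorSpan ℝ U ≤ (f : E →ₗ[ℝ] ℝ).ker) {x : E} (hx : x ∈ U) (t : ℝ) :
    eulerChar (U ∩ f ⁻¹' {t}) = ({f x} : Set ℝ).indicator (fun _ => eulerChar U) t := by
  have hconst : ∀ y ∈ U, f y = f x := fun y hy =>
    sub_eq_zero.1 ((map_sub f y x).symm.trans (hf (vsub_mem_vectorSpan ℝ hy hx)))
  by_cases ht : t = f x
  · have hU : U ⊆ f ⁻¹' {t} := fun y hy => (hconst y hy).trans ht.symm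
    rw [indicator_of_mem (mem_singleton_iff.2 ht), inter_eq_left.2 hU]
  · have hempty : U ∩ f ⁻¹' {t} = ∅ :=
      eq_empty_of_forall_notMem fun y hy => ht (hy.2.symm.trans (hconst y hy.1))
    rw [indicator_of_notMem (mem_singleton_iff.not.2 ht), hempty, eulerChar_empty]

lemma IsRelOpen.eulerChar_slice_of_not_le_ker [FiniteDimensional ℝ E] (hU : IsRelOpen U)
    {f : StrongDual ℝ E} (hf : ¬ vectorSpan ℝ U ≤ (f : E →ₗ[ℝ] ℝ).ker) (t : ℝ) :
    eulerChar (U ∩ f ⁻¹' {t}) = (f '' U).indicator (fun _ => -eulerChar U) t := by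
  by_cases ht : t ∈ f '' U
  · rw [indicator_of_mem ht]
    obtain ⟨x, hx, rfl⟩ := ht
    have hslice : (U ∩ f ⁻¹' {f x}).Nonempty := ⟨x, hx, rfl⟩
    rw [eulerChar_of_nonempty hslice, eulerChar_of_nonempty ⟨x, hx⟩,
      hU.vectorSpan_inter_preimage_singleton f hx, ← finrank_inf_ker_add_one hf, pow_succ]
    ring
  · have hempty : U ∩ f ⁻¹' {t} = ∅ :=
      eq_empty_of_forall_notMem fun y hy => ht (hy.2 ▸ mem_image_of_mem f hy.1)
    rw [indicator_of_notMem ht, hempty, eulerChar_empty]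

/-- A bounded, relatively open convex set: the pieces between which the Euler characteristic is
additive. -/
structure IsOpenCell (U : Set E) : Prop where
  isRelOpen : IsRelOpen U
  convex : Convex ℝ U
  isBounded : Bornology.IsBounded U

lemma IsOpenCell.slice (hU : IsOpenCell U) (f : StrongDual ℝ E) (t : ℝ) :
    IsOpenCell (U ∩ f ⁻¹' {t}) where
  isRelOpen := hU.isRelOpen.inter_preimage_singleton f t
  convex := hU.convex.inter ((convex_singleton t).linear_preimage (f : E →ₗ[ℝ] ℝ))
  isBounded := hU.isBounded.subset inter_subset_left

/-- Hadwiger's recursion: the Euler characteristic is recovered as the total drop between the slice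
at each level and the slices just to the right of it. This reduces additivity to slices, and so to
smaller dimension. -/
lemma IsOpenCell.exists_eventually_eulerChar_slice_sub [FiniteDimensional ℝ E]
    (hU : IsOpenCell U) (f : StrongDual ℝ E) :
    ∃ a : ℝ, ∀ t, ∀ᶠ u in nhdsWithin t (Ioi t),
      eulerChar (U ∩ f ⁻¹' {t}) - eulerChar (U ∩ f ⁻¹' {u})
        = Pi.single (M := fun _ => ℤ) a (eulerChar U) t := by
  rcases U.eq_empty_or_nonempty with rfl | ⟨x, hx⟩
  · exact ⟨0, fun t => by simp⟩
  by_cases hf : vectorSpan ℝ U ≤ (f : E →ₗ[ℝ] ℝ).ker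
  · simp only [eulerChar_slice_of_le_ker hf hx]
    exact ⟨f x, eventually_nhdsGT_indicator_singleton_sub _ _⟩
  · have himage : f '' U = Ioo (sInf (f '' U)) (sSup (f '' U)) :=
      eq_Ioo_csInf_csSup_of_isOpen (hU.isRelOpen.isOpen_image hf)
        (hU.convex.isPreconnected.image f f.continuous.continuousOn)
        (f.lipschitz.isBounded_image hU.isBounded)
    have hlt : sInf (f '' U) < sSup (f '' U) := by
      have hfx := himage.subset (mem_image_of_mem f hx)
      exact hfx.1.trans hfx.2
    simp only [hU.isRelOpen.eulerChar_slice_of_not_le_ker hf]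
    rw [himage]
    exact ⟨_, eventually_nhdsGT_indicator_Ioo_sub hlt _⟩

variable {ι : Type*} {I : Finset ι} {a : ι → ℤ} {U : ι → Set E}

lemma sum_mul_eulerChar_eq_zero_of_slices [FiniteDimensional ℝ E]
    (hU : ∀ i ∈ I, IsOpenCell (U i)) (f : StrongDual ℝ E)
    (hslice : ∀ t, ∑ i ∈ I, a i * eulerChar (U i ∩ f ⁻¹' {t}) = 0) :
    ∑ i ∈ I, a i * eulerChar (U i) = 0 := by
  have hjump := fun i hi => (hU i hi).exists_eventually_eulerChar_slice_sub f
  choose! l hl using hjump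
  have hzero : ∀ t, ∑ i ∈ I, a i * Pi.single (M := fun _ => ℤ) (l i) (eulerChar (U i)) t = 0 := by
    intro t
    obtain ⟨u, hu⟩ := ((Filter.eventually_all_finset I).2 fun i hi => hl i hi t).exists
    calc ∑ i ∈ I, a i * Pi.single (M := fun _ => ℤ) (l i) (eulerChar (U i)) t
        = ∑ i ∈ I, a i * eulerChar (U i ∩ f ⁻¹' {t})
            - ∑ i ∈ I, a i * eulerChar (U i ∩ f ⁻¹' {u}) := by
          rw [← Finset.sum_sub_distrib]
          exact Finset.sum_congr rfl fun i hi => by rw [← hu i hi, mul_sub]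
      _ = 0 := by rw [hslice, hslice, sub_zero]
  calc ∑ i ∈ I, a i * eulerChar (U i)
      = ∑ i ∈ I, ∑ t ∈ I.image l,
          a i * Pi.single (M := fun _ => ℤ) (l i) (eulerChar (U i)) t := by
        refine Finset.sum_congr rfl fun i hi => ?_
        simp [Pi.single_apply, Finset.mem_image_of_mem l hi]
    _ = 0 := by
        rw [Finset.sum_comm]
        exact Finset.sum_eq_zero fun t _ => hzero t

lemma sum_mul_eulerChar_eq_zero_of_sub_mem [FiniteDimensional ℝ E] (W : Submodule ℝ E) (y : E)
    (hU : ∀ i ∈ I, IsOpenCell (U i)) (hW : ∀ i ∈ I, ∀ x ∈ U i, x - y ∈ W)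
    (hsum : ∀ x, ∑ i ∈ I, a i * (U i).indicator 1 x = 0) :
    ∑ i ∈ I, a i * eulerChar (U i) = 0 := by
  induction W using WellFoundedLT.induction generalizing y U with
  | ind W ih =>
  rcases eq_or_ne W ⊥ with rfl | hW'
  · rw [← hsum y]
    refine Finset.sum_congr rfl fun i hi => ?_
    rw [eulerChar_eq_indicator_of_subset_singleton fun x hx =>
      sub_eq_zero.1 (by simpa using hW i hi x hx)]
  · obtain ⟨w, hw, hw0⟩ := W.exists_mem_ne_zero_of_ne_bot hW'
    obtain ⟨f, hf : f w ≠ 0⟩ := SeparatingDual.exists_ne_zero (R := ℝ) hw0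
    refine sum_mul_eulerChar_eq_zero_of_slices hU f fun t => ?_
    refine ih (W ⊓ (f : E →ₗ[ℝ] ℝ).ker) (inf_lt_left.2 fun h => hf (h hw))
      (y + ((t - f y) / f w) • w) (fun i hi => (hU i hi).slice f t) ?_ fun x => ?_
    · rintro i hi x ⟨hx, rfl : f x = t⟩
      refine ⟨?_, ?_⟩
      · rw [← sub_sub]
        exact W.sub_mem (hW i hi x hx) (W.smul_mem _ hw)
      · simp [hf]
    · by_cases hx : x ∈ f ⁻¹' {t}
      · classical simpa only [indicator_apply, mem_inter_iff, hx, and_true] using hsum x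
      · exact Finset.sum_eq_zero fun i _ => by
          rw [indicator_of_notMem fun h => hx h.2, mul_zero]

lemma sum_mul_eulerChar_eq_zero [FiniteDimensional ℝ E] (hU : ∀ i ∈ I, IsOpenCell (U i))
    (hsum : ∀ x, ∑ i ∈ I, a i * (U i).indicator 1 x = 0) :
    ∑ i ∈ I, a i * eulerChar (U i) = 0 :=
  sum_mul_eulerChar_eq_zero_of_sub_mem ⊤ 0 hU (fun _ _ _ _ => trivial) hsum

lemma eulerChar_biUnion [FiniteDimensional ℝ E] (hU : ∀ i ∈ I, IsOpenCell (U i))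
    (hdisj : (I : Set ι).PairwiseDisjoint U) (hV : IsOpenCell (⋃ i ∈ I, U i)) :
    eulerChar (⋃ i ∈ I, U i) = ∑ i ∈ I, eulerChar (U i) := by
  have h := sum_mul_eulerChar_eq_zero (I := Finset.insertNone I)
    (a := fun o => o.elim (-1) fun _ => 1) (U := fun o => o.elim (⋃ i ∈ I, U i) U) ?_ ?_
  · simp only [Finset.sum_insertNone, Option.elim, one_mul] at h
    linarith
  · rintro (_ | i) hi
    · exact hV
    · exact hU i (Finset.some_mem_insertNone.1 hi)
  · intro x
    simp only [Finset.sum_insertNone, Option.elim]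
    rw [Finset.indicator_biUnion_apply _ _ hdisj]
    simp

end EulerCharacteristic

section LocalEulerCharacteristic

variable {E : Type*} [NormedAddCommGroup E] [NormedSpace ℝ E] {K N O H : Set E} {x : E}

lemma isOpenCell_intrinsicInterior_inter (hK : Convex ℝ K) (hO : IsOpen O) (hOc : Convex ℝ O)
    (hOb : Bornology.IsBounded O) : IsOpenCell (intrinsicInterior ℝ K ∩ O) where
  isRelOpen := isRelOpen_intrinsicInterior_inter K hO
  convex := (convex_intrinsicInterior hK).inter hOc
  isBounded := hOb.subset inter_subset_right

lemma eulerChar_intrinsicInterior_inter (hO : IsOpen O)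
    (hne : (intrinsicInterior ℝ K ∩ O).Nonempty) :
    eulerChar (intrinsicInterior ℝ K ∩ O) = (-1) ^ Module.finrank ℝ (vectorSpan ℝ K) := by
  rw [eulerChar_of_nonempty hne, vectorSpan_intrinsicInterior_inter hO hne]

lemma openSegment_subset_halfSpace_gt (f : StrongDual ℝ E) (x : E) {y : E} (hy : f x < f y) :
    openSegment ℝ x y ⊆ {z | f x < f z} := by
  rintro _ ⟨a, b, -, hb, hab, rfl⟩
  have hfb := mul_lt_mul_of_pos_left hy hb
  have hfx : f x = a * f x + b * f x := by rw [← add_mul, hab, one_mul]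
  simp only [mem_ofPred_eq, map_add, map_smul, smul_eq_mul]
  linarith

variable [FiniteDimensional ℝ E]

lemma intrinsicInterior_inter_nonempty_iff (hK : Convex ℝ K) (hx : x ∈ K) (hN : N ∈ nhds x)
    (hH : IsOpen H) (hHx : ∀ y ∈ H, openSegment ℝ x y ⊆ H) :
    (intrinsicInterior ℝ K ∩ (N ∩ H)).Nonempty ↔ (K ∩ H).Nonempty := by
  refine ⟨fun ⟨y, hy, _, hyH⟩ => ⟨y, intrinsicInterior_subset hy, hyH⟩, fun ⟨p, hpK, hpH⟩ => ?_⟩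
  obtain ⟨q, hqH, hq⟩ := mem_closure_iff.1 (subset_closure_intrinsicInterior hK hpK) H hH hpH
  have hxq : x ∈ _root_.closure (openSegment ℝ q x) :=
    segment_subset_closure_openSegment (right_mem_segment ℝ q x)
  obtain ⟨z, hzN, hz⟩ := mem_closure_iff_nhds.1 hxq N hN
  exact ⟨z, openSegment_subset_intrinsicInterior hK hq hx hz, hzN,
    hHx q hqH (openSegment_symm ℝ q x ▸ hz)⟩

lemma eulerChar_inter_sub_eulerChar_inter_halfSpace (hK : Convex ℝ K) (hN : IsOpen N)
    (hxN : x ∈ N) (hKN : (K ∩ N).Nonempty → x ∈ K) (f : StrongDual ℝ E) :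
    eulerChar (intrinsicInterior ℝ K ∩ N)
        - eulerChar (intrinsicInterior ℝ K ∩ (N ∩ {y | f x < f y}))
      = (f.toExposed K).indicator (fun _ => (-1) ^ Module.finrank ℝ (vectorSpan ℝ K)) x := by
  have hopen : IsOpen {y | f x < f y} := isOpen_lt continuous_const f.continuous
  have hNx : N ∈ nhds x := hN.mem_nhds hxN
  by_cases hx : x ∈ K
  · have hmeet : (intrinsicInterior ℝ K ∩ N).Nonempty := by
      simpa using (intrinsicInterior_inter_nonempty_iff hK hx hNx isOpen_univ (by simp)).2
        ⟨x, hx, trivial⟩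
    have hhalf := intrinsicInterior_inter_nonempty_iff hK hx hNx hopen
      fun _ => openSegment_subset_halfSpace_gt f x
    rw [eulerChar_intrinsicInterior_inter hN hmeet]
    by_cases hxf : x ∈ f.toExposed K
    · have hempty : intrinsicInterior ℝ K ∩ (N ∩ {y | f x < f y}) = ∅ :=
        not_nonempty_iff_eq_empty.1 fun h =>
          let ⟨y, hyK, hy⟩ := hhalf.1 h
          (hxf.2 y hyK).not_gt hy
      rw [hempty, eulerChar_empty, sub_zero, indicator_of_mem hxf]
    · have hexists : ∃ y ∈ K, f x < f y := by
        by_contra! h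
        exact hxf ⟨hx, h⟩
      rw [eulerChar_intrinsicInterior_inter (hN.inter hopen) (hhalf.2 hexists), sub_self,
        indicator_of_notMem hxf]
  · have hempty : intrinsicInterior ℝ K ∩ N = ∅ := not_nonempty_iff_eq_empty.1 fun h =>
      hx (hKN (h.mono (inter_subset_inter_left N intrinsicInterior_subset)))
    rw [← inter_assoc, hempty, empty_inter, eulerChar_empty, sub_zero,
      indicator_of_notMem fun h => hx h.1]

lemma exists_ball_forall_inter_nonempty_imp_mem {X : Type*} [PseudoMetricSpace X]
    {I : Finset (Set X)} (hI : ∀ F ∈ I, IsClosed F) (x : X) :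
    ∃ r > 0, ∀ F ∈ I, (F ∩ Metric.ball x r).Nonempty → x ∈ F := by
  have hnhds : ∀ᶠ y in nhds x, ∀ F ∈ I, y ∈ F → x ∈ F :=
    (Filter.eventually_all_finset I).2 fun F hF => by
      by_cases hx : x ∈ F
      · exact Filter.Eventually.of_forall fun _ _ => hx
      · filter_upwards [(hI F hF).isOpen_compl.mem_nhds hx] with y hy hyF using absurd hyF hy
  obtain ⟨r, hr, hball⟩ := Metric.eventually_nhds_iff_ball.1 hnhds
  exact ⟨r, hr, fun F hF ⟨y, hyF, hy⟩ => hball y hy F hF hyF⟩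

end LocalEulerCharacteristic

section ExposedFaces

variable {E : Type*} [AddCommGroup E] [TopologicalSpace E] [Module ℝ E]

lemma exists_pos_forall_add_mul_le (V : Finset E) {f g : StrongDual ℝ E} {y : E}
    (hf : ∀ z ∈ convexHull ℝ (V : Set E), f z ≤ f y)
    (hg : ∀ z ∈ f.toExposed (convexHull ℝ (V : Set E)), g z ≤ g y) :
    ∃ ε > 0, ∀ z ∈ convexHull ℝ (V : Set E), f z + ε * g z ≤ f y + ε * g y := by
  have hV : ∀ᶠ ε in nhdsWithin (0 : ℝ) (Ioi 0), ∀ p ∈ V, f p + ε * g p ≤ f y + ε * g y := by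
    refine (Filter.eventually_all_finset V).2 fun p hp => ?_
    have hpP : p ∈ convexHull ℝ (V : Set E) := subset_convexHull ℝ _ hp
    rcases (hf p hpP).lt_or_eq with hlt | heq
    · have hlim (z : E) : Filter.Tendsto (fun ε => f z + ε * g z) (nhds 0) (nhds (f z)) := by
        simpa using (by fun_prop : Continuous fun ε => f z + ε * g z).tendsto 0
      filter_upwards [nhdsWithin_le_nhds ((hlim p).eventually_lt (hlim y) hlt)] with ε hε
      exact hε.le
    · have hgp : g p ≤ g y := hg p ⟨hpP, fun w hw => heq ▸ hf w hw⟩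
      filter_upwards [self_mem_nhdsWithin] with ε (hε : 0 < ε)
      rw [heq]
      gcongr
  obtain ⟨ε, hεV, hε⟩ := (hV.and self_mem_nhdsWithin).exists
  have hhalf : Convex ℝ {z | f z + ε * g z ≤ f y + ε * g y} :=
    convex_halfSpace_le ((f : E →ₗ[ℝ] ℝ) + ε • (g : E →ₗ[ℝ] ℝ)).isLinear _
  exact ⟨ε, hε, convexHull_min hεV hhalf⟩

lemma exists_toExposed_eq_toExposed_toExposed [ContinuousAdd E] [ContinuousConstSMul ℝ E]
    (V : Finset E) {f g : StrongDual ℝ E}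
    (hne : (g.toExposed (f.toExposed (convexHull ℝ (V : Set E)))).Nonempty) :
    ∃ h : StrongDual ℝ E, h.toExposed (convexHull ℝ (V : Set E))
      = g.toExposed (f.toExposed (convexHull ℝ (V : Set E))) := by
  obtain ⟨y, ⟨hyP, hyf⟩, hyg⟩ := hne
  obtain ⟨ε, hε, hmax⟩ := exists_pos_forall_add_mul_le V hyf hyg
  -- The extra copy of `f` makes any maximizer of `h` maximize `f` already, hence also `g`.
  refine ⟨f + (f + ε • g), Subset.antisymm (fun z ⟨hzP, hz⟩ => ?_)
    fun z ⟨⟨hzP, hzf⟩, hzg⟩ => ⟨hzP, fun w hw => ?_⟩⟩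
  · have hzy := hz y hyP
    simp only [add_apply, smul_apply, smul_eq_mul] at hzy
    have hf : f y ≤ f z := by linarith [hmax z hzP]
    have hg : g y ≤ g z := le_of_mul_le_mul_left (by linarith [hyf z hzP]) hε
    exact ⟨⟨hzP, fun w hw => (hyf w hw).trans hf⟩, fun w hw => (hyg w hw).trans hg⟩
  · have hg := mul_le_mul_of_nonneg_left (hzg y ⟨hyP, hyf⟩) hε.le
    simp only [add_apply, smul_apply, smul_eq_mul]
    linarith [hmax w hw, hzf w hw, hzf y hyP]

end ExposedFaces

section Faces

variable {m : ℕ} {P Q F G : Set (Fin m → ℝ)}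

/-- The dot product with `v`, as a continuous linear functional; it turns `faceV v` into Mathlib's
`ContinuousLinearMap.toExposed`. -/
noncomputable def dotDual (v : Fin m → ℝ) : StrongDual ℝ (Fin m → ℝ) :=
  LinearMap.toContinuousLinearMap
    { toFun := dotp v
      map_add' := fun x y => by simp [dotp, add_mul, Finset.sum_add_distrib]
      map_smul' := fun c x => by simp [dotp, mul_assoc, Finset.mul_sum] }

lemma dotDual_surjective : Function.Surjective (dotDual (m := m)) := fun f =>
  ⟨fun i => f fun j => if i = j then 1 else 0, ContinuousLinearMap.ext fun x =>
    (LinearMap.pi_apply_eq_sum_univ (f : (Fin m → ℝ) →ₗ[ℝ] ℝ) x).symm⟩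

lemma isFaceOf_iff : IsFaceOf Q F ↔ ∃ f : StrongDual ℝ (Fin m → ℝ), F = f.toExposed Q :=
  (dotDual_surjective.exists (p := fun f => F = f.toExposed Q)).symm

lemma isExposed_faceV (v : Fin m → ℝ) (Q : Set (Fin m → ℝ)) : IsExposed ℝ Q (faceV v Q) :=
  fun _ => ⟨dotDual v, rfl⟩

lemma IsFaceOf.isExposed (hF : IsFaceOf Q F) : IsExposed ℝ Q F := by
  obtain ⟨v, rfl⟩ := hF
  exact isExposed_faceV v Q

lemma IsFaceOf.subset (hF : IsFaceOf Q F) : F ⊆ Q :=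
  hF.isExposed.subset

lemma isFaceOf_refl (Q : Set (Fin m → ℝ)) : IsFaceOf Q Q :=
  ⟨0, by simp [faceV, dotp]⟩

lemma IsFaceOf.nonempty (hF : IsFaceOf Q F) (hQ : IsCompact Q) (hne : Q.Nonempty) :
    F.Nonempty := by
  obtain ⟨f, rfl⟩ := isFaceOf_iff.1 hF
  obtain ⟨x, hx, hmax⟩ := hQ.exists_isMaxOn hne f.continuous.continuousOn
  exact ⟨x, hx, fun y hy => hmax hy⟩

namespace IsPolytope

lemma isCompact (hP : IsPolytope P) : IsCompact P := by
  obtain ⟨V, rfl⟩ := hP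
  exact V.finite_toSet.isCompact_convexHull ℝ

lemma convex (hP : IsPolytope P) : Convex ℝ P := by
  obtain ⟨V, rfl⟩ := hP
  exact convex_convexHull ℝ _

lemma finite_faces (hP : IsPolytope P) : {F | IsFaceOf P F}.Finite := by
  obtain ⟨V, hV⟩ := id hP
  have hKM : ∀ F, IsFaceOf P F → _root_.closure (convexHull ℝ (F.extremePoints ℝ)) = F :=
    fun F hF => closure_convexHull_extremePoints (hF.isExposed.isCompact hP.isCompact)
      (hF.isExposed.convex hP.convex)
  refine Set.Finite.of_finite_image (f := Set.extremePoints ℝ)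
    (V.finite_toSet.finite_subsets.subset ?_) fun F hF G hG hFG => ?_
  · rintro _ ⟨F, hF, rfl⟩
    exact (hF.isExposed.isExtreme.extremePoints_subset_extremePoints).trans
      (hV ▸ extremePoints_convexHull_subset)
  · rw [← hKM F hF, ← hKM G hG, hFG]

lemma isFaceOf_trans (hP : IsPolytope P) (hF : IsFaceOf P F) (hG : IsFaceOf F G)
    (hne : G.Nonempty) : IsFaceOf P G := by
  obtain ⟨V, rfl⟩ := hP
  obtain ⟨f, rfl⟩ := isFaceOf_iff.1 hF
  obtain ⟨g, rfl⟩ := isFaceOf_iff.1 hG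
  obtain ⟨h, hh⟩ := exists_toExposed_eq_toExposed_toExposed V hne
  exact isFaceOf_iff.2 ⟨h, hh.symm⟩

lemma exists_face_mem_intrinsicInterior (hP : IsPolytope P) {y : Fin m → ℝ} (hy : y ∈ P) :
    ∃ F, IsFaceOf P F ∧ y ∈ intrinsicInterior ℝ F := by
  have hfin : {F | IsFaceOf P F ∧ y ∈ F}.Finite := hP.finite_faces.subset fun F hF => hF.1
  obtain ⟨F, ⟨hF, hyF⟩, hmin⟩ := hfin.exists_minimal ⟨P, isFaceOf_refl P, hy⟩
  refine ⟨F, hF, ?_⟩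
  by_contra hyi
  obtain ⟨f, hf, z, hz, hfz⟩ :=
    exists_supporting_of_notMem_intrinsicInterior (hF.isExposed.convex hP.convex) hyF hyi
  have hyG : y ∈ f.toExposed F := ⟨hyF, hf⟩
  have hG : IsFaceOf P (f.toExposed F) :=
    hP.isFaceOf_trans hF (isFaceOf_iff.2 ⟨f, rfl⟩) ⟨y, hyG⟩
  have hzG : z ∈ f.toExposed F := hmin ⟨hG, hyG⟩ (fun _ h => h.1) hz
  exact (hzG.2 y hyF).not_gt hfz

end IsPolytope

end Faces

section Subdivision

variable {m : ℕ} {S : Finset (Set (Fin m → ℝ))} {Q F G : Set (Fin m → ℝ)}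

namespace IsSubdivision

lemma finite_faces (hS : IsSubdivision S Q) : {F | IsFaceOfSubdivision S F}.Finite := by
  have hunion : {F | IsFaceOfSubdivision S F} = ⋃ P ∈ S, {F | IsFaceOf P F} := by
    ext F
    simp [IsFaceOfSubdivision]
  rw [hunion]
  exact S.finite_toSet.biUnion fun P hP => (hS.poly P hP).finite_faces

lemma isClosed (hS : IsSubdivision S Q) : IsClosed Q := by
  rw [← hS.cover, sUnion_eq_biUnion]
  exact S.finite_toSet.isClosed_biUnion fun P hP => (hS.poly P hP).isCompact.isClosed

lemma face_subset (hS : IsSubdivision S Q) (hF : IsFaceOfSubdivision S F) : F ⊆ Q := by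
  obtain ⟨P, hP, hFP⟩ := hF
  exact hFP.subset.trans (hS.cover ▸ subset_sUnion_of_mem (Finset.mem_coe.2 hP))

lemma pdim_face_le (hS : IsSubdivision S Q) (hF : IsFaceOfSubdivision S F) : pdim F ≤ pdim Q :=
  Submodule.finrank_mono (vectorSpan_mono ℝ (hS.face_subset hF))

lemma face_isClosed (hS : IsSubdivision S Q) (hF : IsFaceOfSubdivision S F) : IsClosed F := by
  obtain ⟨P, hP, hFP⟩ := hF
  exact hFP.isExposed.isClosed (hS.poly P hP).isCompact.isClosed

lemma face_convex (hS : IsSubdivision S Q) (hF : IsFaceOfSubdivision S F) : Convex ℝ F := by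
  obtain ⟨P, hP, hFP⟩ := hF
  exact hFP.isExposed.convex (hS.poly P hP).convex

lemma exists_face_mem_intrinsicInterior (hS : IsSubdivision S Q) {y : Fin m → ℝ} (hy : y ∈ Q) :
    ∃ F, IsFaceOfSubdivision S F ∧ y ∈ intrinsicInterior ℝ F := by
  rw [← hS.cover] at hy
  obtain ⟨P, hP, hyP⟩ := hy
  obtain ⟨F, hF, hyF⟩ := (hS.poly P hP).exists_face_mem_intrinsicInterior hyP
  exact ⟨F, ⟨P, hP, hF⟩, hyF⟩

lemma face_subset_of_mem_intrinsicInterior (hS : IsSubdivision S Q)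
    (hF : IsFaceOfSubdivision S F) (hG : IsFaceOfSubdivision S G) {y : Fin m → ℝ}
    (hyF : y ∈ intrinsicInterior ℝ F) (hyG : y ∈ G) : F ⊆ G := by
  obtain ⟨P, hP, hFP⟩ := hF
  obtain ⟨P', hP', hGP'⟩ := hG
  refine subset_of_isExtreme_of_mem_intrinsicInterior hGP'.isExposed.isExtreme ?_ hyF hyG
  rcases eq_or_ne P P' with rfl | hPP'
  · exact hFP.subset
  · have hy : y ∈ P ∩ P' := ⟨hFP.subset (intrinsicInterior_subset hyF), hGP'.subset hyG⟩
    have hface : IsFaceOf P (P ∩ P') := (hS.inter_face P hP P' hP' hPP' ⟨y, hy⟩).1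
    exact (subset_of_isExtreme_of_mem_intrinsicInterior hface.isExposed.isExtreme
      hFP.subset hyF hy).trans inter_subset_right

lemma isInteriorFace_iff (hS : IsSubdivision S Q) : IsInteriorFace S Q F ↔
    IsFaceOfSubdivision S F ∧ (F ∩ intrinsicInterior ℝ Q).Nonempty := by
  refine and_congr_right fun hF => ?_
  rw [← closure_sdiff_intrinsicInterior, hS.isClosed.closure_eq, not_subset]
  refine exists_congr fun z => and_congr_right fun hz => ?_
  simp [hS.face_subset hF hz]

/-- The interior faces of a subdivision, as a finset: the index set of the alternating sums. -/
noncomputable def interiorFaces (hS : IsSubdivision S Q) : Finset (Set (Fin m → ℝ)) :=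
  (hS.finite_faces.subset fun F (hF : IsInteriorFace S Q F) => hF.1).toFinset

lemma mem_interiorFaces (hS : IsSubdivision S Q) : F ∈ hS.interiorFaces ↔
    IsFaceOfSubdivision S F ∧ (F ∩ intrinsicInterior ℝ Q).Nonempty := by
  exact (Set.Finite.mem_toFinset _).trans hS.isInteriorFace_iff

lemma biUnion_interiorFaces_intrinsicInterior (hS : IsSubdivision S Q) (hQ : Convex ℝ Q) :
    ⋃ F ∈ hS.interiorFaces, intrinsicInterior ℝ F = intrinsicInterior ℝ Q := by
  refine Subset.antisymm (iUnion₂_subset fun F hF => ?_) fun y hy => ?_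
  · obtain ⟨hF, hne⟩ := hS.mem_interiorFaces.1 hF
    exact intrinsicInterior_subset_intrinsicInterior hQ (hS.face_subset hF) hne
  · obtain ⟨F, hF, hyF⟩ := hS.exists_face_mem_intrinsicInterior (intrinsicInterior_subset hy)
    exact mem_biUnion (hS.mem_interiorFaces.2 ⟨hF, y, intrinsicInterior_subset hyF, hy⟩) hyF

lemma pairwiseDisjoint_intrinsicInterior (hS : IsSubdivision S Q) :
    {F | IsFaceOfSubdivision S F}.PairwiseDisjoint (intrinsicInterior ℝ) := by
  refine fun F hF G hG hFG => disjoint_left.2 fun y hyF hyG => hFG (Subset.antisymm ?_ ?_)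
  · exact hS.face_subset_of_mem_intrinsicInterior hF hG hyF (intrinsicInterior_subset hyG)
  · exact hS.face_subset_of_mem_intrinsicInterior hG hF hyG (intrinsicInterior_subset hyF)

lemma sum_interiorFaces_eulerChar_inter (hS : IsSubdivision S Q) (hQ : Convex ℝ Q)
    {O : Set (Fin m → ℝ)} (hO : IsOpen O) (hOc : Convex ℝ O) (hOb : Bornology.IsBounded O) :
    ∑ F ∈ hS.interiorFaces, eulerChar (intrinsicInterior ℝ F ∩ O)
      = eulerChar (intrinsicInterior ℝ Q ∩ O) := by
  have hface : ∀ F ∈ hS.interiorFaces, IsFaceOfSubdivision S F :=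
    fun F hF => (hS.mem_interiorFaces.1 hF).1
  have hunion : ⋃ F ∈ hS.interiorFaces, intrinsicInterior ℝ F ∩ O = intrinsicInterior ℝ Q ∩ O := by
    rw [← hS.biUnion_interiorFaces_intrinsicInterior hQ, iUnion₂_inter]
  rw [← hunion]
  refine (eulerChar_biUnion (fun F hF => isOpenCell_intrinsicInterior_inter
    (hS.face_convex (hface F hF)) hO hOc hOb) ?_ ?_).symm
  · exact (hS.pairwiseDisjoint_intrinsicInterior.subset hface).mono fun _ => inter_subset_left
  · exact hunion ▸ isOpenCell_intrinsicInterior_inter hQ hO hOc hOb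

lemma sum_interiorFaces_indicator_faceV (hS : IsSubdivision S Q) (hQ : Convex ℝ Q)
    (v x : Fin m → ℝ) :
    ∑ F ∈ hS.interiorFaces, (faceV v F).indicator (fun _ => (-1 : ℤ) ^ pdim F) x
      = (faceV v Q).indicator (fun _ => (-1) ^ pdim Q) x := by
  classical
  have hface : ∀ F ∈ hS.interiorFaces, IsFaceOfSubdivision S F :=
    fun F hF => (hS.mem_interiorFaces.1 hF).1
  have hclosed : ∀ F ∈ insert Q hS.interiorFaces, IsClosed F :=
    (Finset.forall_mem_insert _ _ _).2 ⟨hS.isClosed, fun F hF => hS.face_isClosed (hface F hF)⟩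
  obtain ⟨r, hr, hball⟩ := exists_ball_forall_inter_nonempty_imp_mem hclosed x
  obtain ⟨hballQ, hballF⟩ := (Finset.forall_mem_insert _ _ _).1 hball
  let N := Metric.ball x r
  let H := {y | dotDual v x < dotDual v y}
  have hN : IsOpen N := Metric.isOpen_ball
  have hNH : IsOpen (N ∩ H) := hN.inter (isOpen_lt continuous_const (dotDual v).continuous)
  have hlocal : ∀ K, Convex ℝ K → ((K ∩ N).Nonempty → x ∈ K) →
      eulerChar (intrinsicInterior ℝ K ∩ N) - eulerChar (intrinsicInterior ℝ K ∩ (N ∩ H))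
        = (faceV v K).indicator (fun _ => (-1) ^ pdim K) x := fun K hK hKN =>
    eulerChar_inter_sub_eulerChar_inter_halfSpace hK hN (Metric.mem_ball_self hr) hKN (dotDual v)
  calc ∑ F ∈ hS.interiorFaces, (faceV v F).indicator (fun _ => (-1 : ℤ) ^ pdim F) x
      = ∑ F ∈ hS.interiorFaces, eulerChar (intrinsicInterior ℝ F ∩ N)
          - ∑ F ∈ hS.interiorFaces, eulerChar (intrinsicInterior ℝ F ∩ (N ∩ H)) := by
        rw [← Finset.sum_sub_distrib]
        exact Finset.sum_congr rfl fun F hF =>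
          (hlocal F (hS.face_convex (hface F hF)) (hballF F hF)).symm
    _ = eulerChar (intrinsicInterior ℝ Q ∩ N) - eulerChar (intrinsicInterior ℝ Q ∩ (N ∩ H)) := by
        rw [hS.sum_interiorFaces_eulerChar_inter hQ hN (convex_ball x r) Metric.isBounded_ball,
          hS.sum_interiorFaces_eulerChar_inter hQ hNH
            ((convex_ball x r).inter (convex_halfSpace_gt (dotDual v).isLinear _))
            (Metric.isBounded_ball.subset inter_subset_left)]
    _ = (faceV v Q).indicator (fun _ => (-1) ^ pdim Q) x := hlocal Q hQ hballQ

end IsSubdivision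

end Subdivision

lemma neg_one_pow_sub_of_le {a b : ℕ} (h : b ≤ a) :
    (-1 : ℤ) ^ (a - b) = (-1) ^ a * (-1) ^ b := by
  rw [← pow_sub_mul_pow (-1 : ℤ) h, mul_assoc, ← mul_pow]
  simp

lemma mPoly_nonempty {m : ℕ} (M : Matroid (Fin m)) : (mPoly M).Nonempty := by
  classical
  obtain ⟨B, hB⟩ := M.exists_isBase
  exact ⟨eVec B.toFinset, subset_convexHull ℝ _ ⟨B.toFinset, by simpa using hB, rfl⟩⟩

open Classical in
theorem interior_face_cancellation_general {m : ℕ} {S : Finset (Set (Fin m → ℝ))}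
    {Q : Set (Fin m → ℝ)} (hS : IsSubdivision S Q) (hQ : Convex ℝ Q) (v : Fin m → ℝ)
    {F₀ : Set (Fin m → ℝ)} (hF₀ : IsFaceOfSubdivision S F₀) (hne : F₀.Nonempty) :
    (∑ᶠ F ∈ {F | IsInteriorFace S Q F},
        (-1 : ℤ) ^ (pdim Q - pdim F) * (if F₀ ⊆ faceV v F then 1 else 0))
      = if F₀ ⊆ faceV v Q then 1 else 0 := by
  obtain ⟨x, hx⟩ := Set.Nonempty.intrinsicInterior (hS.face_convex hF₀) hne
  have hxF₀ : x ∈ F₀ := intrinsicInterior_subset hx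
  have hiff : ∀ K, (x ∈ K → F₀ ⊆ K) → (F₀ ⊆ faceV v K ↔ x ∈ faceV v K) := fun K hK =>
    ⟨fun h => h hxF₀, fun h => subset_of_isExtreme_of_mem_intrinsicInterior
      (isExposed_faceV v K).isExtreme (hK h.1) hx h⟩
  rw [finsum_mem_eq_finite_toFinset_sum _ (hS.finite_faces.subset fun F hF => hF.1)]
  calc ∑ F ∈ hS.interiorFaces, (-1 : ℤ) ^ (pdim Q - pdim F) * (if F₀ ⊆ faceV v F then 1 else 0)
      = (-1) ^ pdim Q * ∑ F ∈ hS.interiorFaces,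
          (faceV v F).indicator (fun _ => (-1 : ℤ) ^ pdim F) x := by
        rw [Finset.mul_sum]
        refine Finset.sum_congr rfl fun F hF => ?_
        obtain ⟨hF, -⟩ := hS.mem_interiorFaces.1 hF
        rw [neg_one_pow_sub_of_le (hS.pdim_face_le hF), indicator_apply, mul_assoc, mul_boole,
          if_congr (hiff F (hS.face_subset_of_mem_intrinsicInterior hF₀ hF hx)) rfl rfl]
    _ = if F₀ ⊆ faceV v Q then 1 else 0 := by
        rw [hS.sum_interiorFaces_indicator_faceV hQ, indicator_apply, mul_ite, mul_zero,
          ← mul_pow, if_congr (hiff Q fun _ => hS.face_subset hF₀) rfl rfl]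
        simp

open Classical in
/-- Let `S` be a matroid polytope subdivision of a matroid polytope
`Q ⊆ ℝ^{n+1}`, let `v ≠ 0` and let `F₀` be a face of `S`.  Then
`∑_F (-1)^{dim Q - dim F} · j(F)`, summed over the interior faces `F` of `S`, where
`j(F) = 1` if `face_v(F) ⊇ F₀` and `0` otherwise, equals `1` if `F₀ ⊆ face_v(Q)` and `0`
otherwise. -/
theorem interior_face_cancellation {n : ℕ} (M : Matroid (Fin (n + 1)))
    (Q : Set (Fin (n + 1) → ℝ)) (hQ : Q = mPoly M)
    (S : Finset (Set (Fin (n + 1) → ℝ))) (hS : IsMatroidSubdivision S Q)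
    (v : Fin (n + 1) → ℝ) (hv : v ≠ 0)
    (F₀ : Set (Fin (n + 1) → ℝ)) (hF₀ : IsFaceOfSubdivision S F₀) :
    (∑ᶠ F ∈ {F | IsInteriorFace S Q F},
        (-1 : ℤ) ^ (pdim Q - pdim F) * (if F₀ ⊆ faceV v F then 1 else 0))
      = if F₀ ⊆ faceV v Q then 1 else 0 := by
  have hne : F₀.Nonempty := by
    obtain ⟨P, hP, hF₀⟩ := hF₀
    obtain ⟨M', rfl⟩ := hS.2 P hP
    exact hF₀.nonempty (hS.1.poly _ hP).isCompact (mPoly_nonempty M')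
  exact interior_face_cancellation_general hS.1 (hQ ▸ convex_convexHull ℝ _) v hF₀ hne
end

section
/- Let 0 ≤ k ≤ d < n and let M = U_{d+1,n+1} be the uniform matroid of rank d+1 on E = {0,…,n}. For every chain of flats ∅ = F_0 ⊊ F_1 ⊊ ⋯ ⊊ F_k ⊊ F_{k+1} = E of M, the product ∏_{i=0}^{k} β(M|F_{i+1}/F_i) equals 0 unless |F_i| = i for all 0 ≤ i ≤ k, in which case it equals the binomial coefficient C(n−k−1, d−k). (Consequently, as a tropical cycle, csm_k(U_{d+1,n+1}) is the Bergman fan of U_{k+1,n+1} with all top-dimensional weights equal to (−1)^{d−k}·C(n−k−1,d−k).) -/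
open Matroid Set

/-- The uniform matroid of rank `r` on the ground set `Fin m`: the independent sets are
the sets of cardinality at most `r`. -/
noncomputable def unifM (m r : ℕ) : Matroid (Fin m) :=
  (IndepMatroid.ofFinite (E := (Set.univ : Set (Fin m))) (Set.toFinite _)
    (fun I => I.ncard ≤ r)
    (by simp)
    (fun I J hJ hIJ => le_trans (Set.ncard_le_ncard hIJ (Set.toFinite _)) hJ)
    (fun I J hI hJ hlt => by
      obtain ⟨e, heJ, heI⟩ : ∃ e ∈ J, e ∉ I := by
        by_contra h
        push_neg at h
        exact absurd (Set.ncard_le_ncard h (Set.toFinite _)) (not_le.mpr hlt)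
      refine ⟨e, heJ, heI, ?_⟩
      show (insert e I).ncard ≤ r
      rw [Set.ncard_insert_of_notMem heI (Set.toFinite _)]
      exact le_trans (Nat.succ_le_of_lt hlt) hJ)
    (fun I _ => Set.subset_univ _)).matroid

open Classical in
/-- The characteristic polynomial `χ_M(λ) = ∑_{F ∈ L(M)} μ(∅,F) λ^{r(M)-r(F)}` of a
loopless matroid `M`; it is `0` if `M` has a loop. -/
noncomputable def charPoly {m : ℕ} (M : Matroid (Fin m)) : Polynomial ℤ :=
  if mLoopless M then
    ∑ F ∈ flatsF M, Polynomial.C (mob (flatsF M) ∅ F) * Polynomial.X ^ (rk M M.E - rk M ↑F)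
  else 0

/-- The reduced characteristic polynomial `χ̄_M(λ) = χ_M(λ)/(λ-1)`, computed as the
quotient upon division by the monic polynomial `λ - 1`. -/
noncomputable def redCharPoly {m : ℕ} (M : Matroid (Fin m)) : Polynomial ℤ :=
  charPoly M /ₘ (Polynomial.X - Polynomial.C 1)

/-!
For `N = U_{r,S}` with `r > 0`, every set with fewer than `r` elements is a flat, so the interval
below a proper flat is Boolean and `μ(∅,F) = (-1)^{|F|}`. As the values `μ(∅,F)` sum to zero, the
rank may be replaced by `r(F) - r`, and `β(N) = ∑_{j<r} (-1)^{r-1-j} C(|S|,j) (r - j)`: this is an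
alternating sum of binomial coefficients summed twice, hence `C(|S|-2, r-1)`
if `|S| ≥ 2`.

Minors of uniform matroids are uniform. In a chain of flats, all the minors `M|F_{i+1}/F_i` except
the last are free, and a free matroid has `β = 0` unless it consists of a single coloop, where
`β = 1`. So the product vanishes unless each step of the chain adds one element, and then only the
last factor, `β(M/F_k)`, is left.
-/

theorem sum_range_sub_mul_eq_sum_sum_range {R : Type*} [Ring R] (a : ℕ → R) (r : ℕ) :
    ∑ i ∈ Finset.range r, ((r : R) - i) * a i =
      ∑ j ∈ Finset.range r, ∑ i ∈ Finset.range (j + 1), a i := by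
  induction r with
  | zero => simp
  | succ r ih =>
    have hsplit (i : ℕ) : (((r + 1 : ℕ) : R) - i) * a i = ((r : R) - i) * a i + a i := by
      push_cast
      noncomm_ring
    simp only [hsplit, Finset.sum_add_distrib]
    rw [Finset.sum_range_succ, sub_self, zero_mul, add_zero, ih,
      Finset.sum_range_succ (fun j => ∑ i ∈ Finset.range (j + 1), a i)]

theorem sum_range_sub_mul_neg_one_pow_mul_choose (t r : ℕ) :
    ∑ i ∈ Finset.range (r + 1), (((r + 1 : ℕ) : ℤ) - i) * ((-1) ^ i * (t + 2).choose i) =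
      (-1) ^ r * t.choose r := by
  rw [sum_range_sub_mul_eq_sum_sum_range]
  simp only [Int.alternating_sum_range_choose_eq_choose]

theorem sum_powerset_card_lt_apply_card {α M : Type*} [AddCommMonoid M] (S : Finset α) (r : ℕ)
    (f : ℕ → M) :
    ∑ F ∈ S.powerset with F.card < r, f F.card =
      ∑ j ∈ Finset.range r, S.card.choose j • f j := by
  have hmaps : ∀ F ∈ S.powerset.filter (fun F => F.card < r), F.card ∈ Finset.range r :=
    fun F hF => Finset.mem_range.2 (Finset.mem_filter.1 hF).2
  rw [← Finset.sum_fiberwise_of_maps_to' hmaps]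
  refine Finset.sum_congr rfl fun j hj => ?_
  have hfiber : {F ∈ S.powerset.filter (fun F => F.card < r) | F.card = j} =
      S.powersetCard j := by
    ext F
    simp only [Finset.mem_filter, Finset.mem_powerset, Finset.mem_powersetCard]
    grind
  rw [hfiber, Finset.sum_const, Finset.card_powersetCard]

theorem sum_Icc_neg_one_pow_card_sdiff {α : Type*} [DecidableEq α] {F G : Finset α}
    (hFG : F ⊂ G) : ∑ H ∈ Finset.Icc F G, (-1 : ℤ) ^ (H \ F).card = 0 := by
  have hcancel : ∀ A ∈ (G \ F).powerset, (F ∪ A) \ F = A := fun A hA =>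
    Finset.union_sdiff_cancel_left
      (Finset.disjoint_sdiff.mono_right (Finset.mem_powerset.1 hA))
  have hinj : Set.InjOn (F ∪ ·) ((G \ F).powerset : Set (Finset α)) := fun A hA B hB hAB => by
    rw [← hcancel A hA, ← hcancel B hB]
    exact congrArg (· \ F) hAB
  rw [Finset.Icc_eq_image_powerset hFG.subset, Finset.sum_image hinj,
    Finset.sum_congr rfl fun A hA => by rw [hcancel A hA]]
  exact Finset.sum_powerset_neg_one_pow_card_of_nonempty
    (Finset.sdiff_nonempty.2 hFG.not_subset)

section Moebius

variable {α : Type*} [DecidableEq α] (flats : Finset (Finset α))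

theorem mob_self (F : Finset α) : mob flats F F = 1 := by
  rw [mob, if_pos subset_rfl, if_pos rfl]

theorem mob_of_ssubset {F G : Finset α} (hFG : F ⊂ G) :
    mob flats F G = -∑ H ∈ flats with F ⊆ H ∧ H ⊂ G, mob flats F H := by
  rw [mob, if_pos hFG.subset, if_neg hFG.ne, Finset.sum_attach _ (fun H => mob flats F H)]

variable {flats}

theorem mob_eq_neg_one_pow_of_Icc_subset {F G : Finset α} (hFG : F ⊆ G)
    (hflats : Finset.Icc F G ⊆ flats) : mob flats F G = (-1) ^ (G \ F).card := by
  induction G using Finset.strongInduction with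
  | H G ih =>
    obtain rfl | hssub := hFG.eq_or_ssubset
    · rw [mob_self, Finset.sdiff_self, Finset.card_empty, pow_zero]
    have hIco : flats.filter (fun H => F ⊆ H ∧ H ⊂ G) = Finset.Ico F G := by
      ext H
      simp only [Finset.mem_filter, Finset.mem_Ico, and_iff_right_iff_imp]
      exact fun hH => hflats (Finset.mem_Icc.2 ⟨hH.1, hH.2.le⟩)
    have hbelow : ∀ H ∈ Finset.Ico F G, mob flats F H = (-1) ^ (H \ F).card := fun H hH => by
      obtain ⟨hFH, hHG⟩ := Finset.mem_Ico.1 hH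
      exact ih H hHG hFH ((Finset.Icc_subset_Icc_right hHG.le).trans hflats)
    rw [mob_of_ssubset flats hssub, hIco, Finset.sum_congr rfl hbelow, neg_eq_iff_add_eq_zero,
      Finset.sum_Ico_add_eq_sum_Icc hFG, sum_Icc_neg_one_pow_card_sdiff hssub]

end Moebius

theorem rk_eq_ncard_of_isBasis' {α : Type*} {M : Matroid α} {I X : Set α} (hI : M.IsBasis' I X)
    (hfin : I.Finite) : rk M X = I.ncard := by
  refine IsGreatest.csSup_eq ⟨⟨I, ⟨hI.indep, hI.subset⟩, rfl⟩, ?_⟩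
  rintro _ ⟨J, ⟨hJ, hJX⟩, rfl⟩
  have hencard : J.encard ≤ I.encard :=
    (hJ.encard_le_eRk_of_subset hJX).trans_eq hI.eRk_eq_encard
  exact ENat.toNat_le_toNat hencard hfin.encard_lt_top.ne

theorem betaInv_eq_sum_ssubset_ground {m : ℕ} {N : Matroid (Fin m)} {S : Finset (Fin m)}
    (hN : mLoopless N) (hE : N.E = ↑S) (hS : S.Nonempty) :
    betaInv N = (-1) ^ rk N ↑S *
      ∑ F ∈ flatsF N with F ⊂ S, mob (flatsF N) ∅ F * ((rk N ↑F : ℤ) - rk N ↑S) := by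
  have hflats : flatsF N = insert S ((flatsF N).filter (· ⊂ S)) := by
    ext F
    have hS : S ∈ flatsF N := by simp [flatsF, ← hE]
    have hF : F ∈ flatsF N → F ⊆ S := fun hF => by
      have hflat : N.IsFlat ↑F := by simpa [flatsF] using hF
      exact_mod_cast hE ▸ hflat.subset_ground
    grind
  have hmob : mob (flatsF N) ∅ S = -∑ F ∈ flatsF N with F ⊂ S, mob (flatsF N) ∅ F := by
    simp only [mob_of_ssubset _ (Finset.empty_ssubset.2 hS), Finset.empty_subset, true_and]
  rw [betaInv, if_pos hN, hE]
  congr 1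
  calc ∑ F ∈ flatsF N, mob (flatsF N) ∅ F * (rk N ↑F : ℤ)
      = mob (flatsF N) ∅ S * rk N ↑S +
          ∑ F ∈ flatsF N with F ⊂ S, mob (flatsF N) ∅ F * (rk N ↑F : ℤ) := by
        conv_lhs => rw [hflats]
        rw [Finset.sum_insert (by simp), ← hflats]
    _ = ∑ F ∈ flatsF N with F ⊂ S, mob (flatsF N) ∅ F * ((rk N ↑F : ℤ) - rk N ↑S) := by
        simp only [hmob, mul_sub, Finset.sum_sub_distrib, ← Finset.sum_mul]
        ring

/-- `N` is the uniform matroid `U_{r,S}`. Unlike `unifM`, it lives on a finite subset `S` of the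
type, so that minors are covered, and `r ≤ |S|` is required, so that `r` is the rank of `N`. -/
structure IsUniformOn {α : Type*} (N : Matroid α) (S : Finset α) (r : ℕ) : Prop where
  ground_eq : N.E = ↑S
  rank_le_card : r ≤ S.card
  indep_iff (I : Finset α) : N.Indep ↑I ↔ I ⊆ S ∧ I.card ≤ r

theorem isUniformOn_unifM {m r : ℕ} (hr : r ≤ m) : IsUniformOn (unifM m r) Finset.univ r where
  ground_eq := by simp [unifM]
  rank_le_card := by simpa using hr
  indep_iff I := by simp [unifM, Set.ncard_coe_finset]

namespace IsUniformOn

section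

variable {α : Type*} {N : Matroid α} {S F G I : Finset α} {r : ℕ}

theorem restrict (h : IsUniformOn N S r) (hG : G ⊆ S) :
    IsUniformOn (N ↾ (G : Set α)) G (min r G.card) where
  ground_eq := rfl
  rank_le_card := min_le_right _ _
  indep_iff I := by
    rw [Matroid.restrict_indep_iff, h.indep_iff, Finset.coe_subset, le_min_iff]
    exact ⟨fun ⟨⟨_, hr⟩, hI⟩ => ⟨hI, hr, Finset.card_le_card hI⟩,
      fun ⟨hI, hr, _⟩ => ⟨⟨hI.trans hG, hr⟩, hI⟩⟩

theorem contract [DecidableEq α] (h : IsUniformOn N S r) (hF : F ⊆ S) (hFr : F.card ≤ r) :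
    IsUniformOn (N ／ (F : Set α)) (S \ F) (r - F.card) where
  ground_eq := by simp [h.ground_eq]
  rank_le_card := by
    rw [Finset.card_sdiff_of_subset hF]
    exact Nat.sub_le_sub_right h.rank_le_card _
  indep_iff I := by
    have hFindep : N.Indep ↑F := (h.indep_iff F).2 ⟨hF, hFr⟩
    rw [hFindep.contract_indep_iff, ← Finset.coe_union, h.indep_iff, Finset.disjoint_coe,
      Finset.subset_sdiff, Finset.union_subset_iff]
    constructor
    · rintro ⟨hdisj, ⟨hI, -⟩, hcard⟩
      rw [Finset.card_union_of_disjoint hdisj] at hcard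
      exact ⟨⟨hI, hdisj⟩, by omega⟩
    · rintro ⟨⟨hI, hdisj⟩, hcard⟩
      exact ⟨hdisj, ⟨hI, hF⟩, by rw [Finset.card_union_of_disjoint hdisj]; omega⟩

theorem minor [DecidableEq α] (h : IsUniformOn N S r) (hFG : F ⊆ G) (hG : G ⊆ S)
    (hF : F.card ≤ r) : IsUniformOn (mMinor N ↑G ↑F) (G \ F) (min r G.card - F.card) :=
  (h.restrict hG).contract hFG (le_min hF (Finset.card_le_card hFG))

theorem isBase_of_card_eq (h : IsUniformOn N S r) (hI : I ⊆ S) (hcard : I.card = r) :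
    N.IsBase ↑I := by
  refine ((h.indep_iff I).2 ⟨hI, hcard.le⟩).isBase_of_maximal fun J hJ hIJ => ?_
  have hJfin : J.Finite := S.finite_toSet.subset (h.ground_eq ▸ hJ.subset_ground)
  lift J to Finset α using hJfin
  rw [Finset.coe_inj]
  exact Finset.eq_of_subset_of_card_le (by exact_mod_cast hIJ)
    (hcard ▸ ((h.indep_iff J).1 hJ).2)

theorem isFlat_of_card_lt (h : IsUniformOn N S r) (hF : F ⊆ S)
    (hcard : F.card < r) : N.IsFlat ↑F := by
  classical
  have hindep : N.Indep ↑F := (h.indep_iff F).2 ⟨hF, hcard.le⟩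
  refine Matroid.isFlat_iff_closure_eq.2 (Set.Subset.antisymm (fun e he => ?_)
    (N.subset_closure _ hindep.subset_ground))
  by_contra heF
  have heS : e ∈ S := by exact_mod_cast h.ground_eq ▸ N.closure_subset_ground _ he
  refine ((hindep.mem_closure_iff_of_notMem heF).1 he).not_indep ?_
  rw [← Finset.coe_insert, h.indep_iff]
  exact ⟨Finset.insert_subset heS hF, (Finset.card_insert_le e F).trans hcard⟩

theorem card_lt_of_isFlat (h : IsUniformOn N S r) (hF : N.IsFlat ↑F) (hne : F ≠ S) :
    F.card < r := by
  by_contra! hcard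
  have hFS : F ⊆ S := by exact_mod_cast h.ground_eq ▸ hF.subset_ground
  obtain ⟨B, hBF, hBr⟩ := Finset.exists_subset_card_eq hcard
  have hclosure := ((h.isBase_of_card_eq (hBF.trans hFS) hBr).spanning_of_superset
    (Finset.coe_subset.2 hBF) hF.subset_ground).closure_eq
  rw [hF.closure, h.ground_eq, Finset.coe_inj] at hclosure
  exact hne hclosure

theorem rk_of_card_le (h : IsUniformOn N S r) (hF : F ⊆ S) (hcard : F.card ≤ r) :
    rk N ↑F = F.card := by
  have hindep : N.Indep ↑F := (h.indep_iff F).2 ⟨hF, hcard⟩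
  rw [rk_eq_ncard_of_isBasis' hindep.isBasis_self.isBasis' F.finite_toSet, Set.ncard_coe_finset]

theorem rk_ground (h : IsUniformOn N S r) : rk N ↑S = r := by
  obtain ⟨B, hBS, hBr⟩ := Finset.exists_subset_card_eq h.rank_le_card
  rw [← h.ground_eq, rk_eq_ncard_of_isBasis'
    (h.isBase_of_card_eq hBS hBr).isBasis_ground.isBasis' B.finite_toSet, Set.ncard_coe_finset, hBr]

theorem mLoopless (h : IsUniformOn N S r) (hr : 0 < r) : mLoopless N := by
  rintro e ⟨heE, hloop⟩
  have hindep : N.Indep ↑({e} : Finset α) :=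
    (h.indep_iff _).2 ⟨by simpa [h.ground_eq] using heE, by simpa using Nat.succ_le_of_lt hr⟩
  obtain ⟨B, hB, heB⟩ := hindep.exists_isBase_superset
  exact hloop B hB (heB (by simp))

end

variable {m r : ℕ} {N : Matroid (Fin m)} {S F G : Finset (Fin m)}

theorem filter_ssubset_flatsF (h : IsUniformOn N S r) :
    (flatsF N).filter (· ⊂ S) = S.powerset.filter fun F => F.card < r := by
  ext F
  simp only [flatsF, Finset.mem_filter, Finset.mem_univ, true_and, Finset.mem_powerset]
  constructor
  · rintro ⟨hflat, hFS⟩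
    exact ⟨hFS.subset, h.card_lt_of_isFlat hflat hFS.ne⟩
  · rintro ⟨hFS, hcard⟩
    refine ⟨h.isFlat_of_card_lt hFS hcard, hFS.ssubset_of_ne ?_⟩
    rintro rfl
    exact hcard.not_ge h.rank_le_card

theorem mob_empty_of_card_lt (h : IsUniformOn N S r) (hF : F ⊆ S) (hcard : F.card < r) :
    mob (flatsF N) ∅ F = (-1) ^ F.card := by
  have hflats : Finset.Icc ∅ F ⊆ flatsF N := fun H hH => by
    have hHF : H ⊆ F := (Finset.mem_Icc.1 hH).2
    have hflat : N.IsFlat ↑H :=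
      h.isFlat_of_card_lt (hHF.trans hF) ((Finset.card_le_card hHF).trans_lt hcard)
    simpa [flatsF] using hflat
  rw [mob_eq_neg_one_pow_of_Icc_subset (Finset.empty_subset F) hflats, Finset.sdiff_empty]

theorem betaInv_eq_sum (h : IsUniformOn N S r) (hr : 0 < r) :
    betaInv N = (-1) ^ (r + 1) *
      ∑ j ∈ Finset.range r, ((r : ℤ) - j) * ((-1) ^ j * S.card.choose j) := by
  have hS : S.Nonempty := Finset.card_pos.1 (hr.trans_le h.rank_le_card)
  have hterm : ∀ F ∈ S.powerset.filter (fun F => F.card < r),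
      mob (flatsF N) ∅ F * ((rk N ↑F : ℤ) - r) = (-1) ^ F.card * ((F.card : ℤ) - r) :=
    fun F hF => by
      obtain ⟨hFS, hcard⟩ := Finset.mem_filter.1 hF
      rw [Finset.mem_powerset] at hFS
      rw [h.mob_empty_of_card_lt hFS hcard, h.rk_of_card_le hFS hcard.le]
  rw [betaInv_eq_sum_ssubset_ground (h.mLoopless hr) h.ground_eq hS, h.rk_ground,
    h.filter_ssubset_flatsF, Finset.sum_congr rfl hterm,
    sum_powerset_card_lt_apply_card S r (fun j => (-1 : ℤ) ^ j * ((j : ℤ) - r)), pow_succ,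
    mul_assoc, neg_one_mul, ← Finset.sum_neg_distrib]
  congr 1
  refine Finset.sum_congr rfl fun j _ => ?_
  rw [nsmul_eq_mul]
  ring

-- For a single coloop, `|S| = r = 1`, the truncated subtraction gives the correct value `1`.
theorem betaInv_eq_choose (h : IsUniformOn N S r) (hr : 0 < r) :
    betaInv N = ((S.card - 2).choose (r - 1) : ℤ) := by
  have hrS := h.rank_le_card
  rw [h.betaInv_eq_sum hr]
  obtain hS | hS : S.card = 1 ∨ 2 ≤ S.card := by omega
  · obtain rfl : r = 1 := by omega
    simp [hS]
  · obtain ⟨t, ht⟩ := Nat.exists_eq_add_of_le' hS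
    obtain ⟨q, rfl⟩ := Nat.exists_eq_add_of_le' hr
    rw [ht, sum_range_sub_mul_neg_one_pow_mul_choose, ← mul_assoc, ← pow_add]
    simp [Even.neg_one_pow (⟨q + 1, by ring⟩ : Even (q + 1 + 1 + q))]

theorem betaInv_minor_ground (h : IsUniformOn N S r) (hF : F ⊆ S) (hcard : F.card < r) :
    betaInv (mMinor N ↑S ↑F) = ((S.card - F.card - 2).choose (r - F.card - 1) : ℤ) := by
  have hminor := h.minor hF subset_rfl hcard.le
  rw [min_eq_left h.rank_le_card] at hminor
  rw [hminor.betaInv_eq_choose (by omega), Finset.card_sdiff_of_subset hF]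

theorem betaInv_minor_of_card_le (h : IsUniformOn N S r) (hFG : F ⊂ G) (hG : G ⊆ S)
    (hcard : G.card ≤ r) :
    betaInv (mMinor N ↑G ↑F) = if G.card = F.card + 1 then 1 else 0 := by
  have hlt := Finset.card_lt_card hFG
  have hminor := h.minor hFG.subset hG (hlt.le.trans hcard)
  rw [min_eq_right hcard] at hminor
  rw [hminor.betaInv_eq_choose (by omega), Finset.card_sdiff_of_subset hFG.subset]
  split_ifs with hstep
  · simp [hstep]
  · rw [Nat.choose_eq_zero_of_lt (by omega), Nat.cast_zero]

end IsUniformOn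

theorem forall_succ_eq_castSucc_add_one_iff {k : ℕ} (f : Fin (k + 1) → ℕ) :
    (∀ i : Fin k, f i.succ = f i.castSucc + 1) ↔ ∀ i : Fin (k + 1), f i = f 0 + i := by
  constructor
  · intro hstep i
    induction i using Fin.induction with
    | zero => simp
    | succ i ih => rw [hstep, ih, Fin.val_castSucc, Fin.val_succ, add_assoc]
  · intro hf i
    rw [hf i.succ, hf i.castSucc, Fin.val_castSucc, Fin.val_succ, add_assoc]

theorem beta_prod_unif_general {m r k : ℕ} {N : Matroid (Fin m)} {S : Finset (Fin m)}
    (h : IsUniformOn N S r) (F : Fin (k + 2) → Finset (Fin m)) (hmono : StrictMono F)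
    (hlast : F (Fin.last (k + 1)) = S) (hflat : ∀ j, N.IsFlat ↑(F j)) :
    ∏ i : Fin (k + 1), betaInv (mMinor N ↑(F i.succ) ↑(F i.castSucc)) =
      if ∀ i : Fin (k + 1), (F i.castSucc).card = (F 0).card + i then
        ((S.card - (F 0).card - k - 2).choose (r - (F 0).card - k - 1) : ℤ)
      else 0 := by
  have hproper (i : Fin (k + 1)) : F i.castSucc ⊂ S := hlast ▸ hmono i.castSucc_lt_last
  have hcard (i : Fin (k + 1)) : (F i.castSucc).card < r :=
    h.card_lt_of_isFlat (hflat _) (hproper i).ne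
  have hfree (i : Fin k) :
      betaInv (mMinor N ↑(F i.castSucc.succ) ↑(F i.castSucc.castSucc)) =
        if (F i.succ.castSucc).card = (F i.castSucc.castSucc).card + 1 then 1 else 0 :=
    h.betaInv_minor_of_card_le (hmono i.castSucc.castSucc_lt_succ) (hproper i.succ).subset
      (hcard i.succ).le
  rw [Fin.prod_univ_castSucc, Fin.succ_last, hlast,
    h.betaInv_minor_ground (hproper (Fin.last k)).subset (hcard (Fin.last k)),
    Finset.prod_congr rfl fun i _ => hfree i, Fintype.prod_boole]
  simp only [forall_succ_eq_castSucc_add_one_iff fun i => (F i.castSucc).card,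
    Fin.castSucc_zero, ite_mul, one_mul, zero_mul]
  split_ifs with hsteps
  · simp only [hsteps (Fin.last k), Fin.val_last, Nat.sub_sub, add_assoc]
  · rfl

/-- Let `0 ≤ k ≤ d < n` and `M = U_{d+1,n+1}`.  For every chain of
flats `∅ = F₀ ⊊ F₁ ⊊ ⋯ ⊊ F_k ⊊ F_{k+1} = E` of `M`, the product
`∏_{i=0}^{k} β(M|F_{i+1}/F_i)` is `0` unless `|F_i| = i` for all `0 ≤ i ≤ k`, in which
case it equals `C(n-k-1, d-k)`. -/
theorem beta_prod_unif {n d k : ℕ} (hkd : k ≤ d) (hdn : d < n)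
    (Fc : Fin (k + 2) → Finset (Fin (n + 1)))
    (hmono : StrictMono Fc) (h0 : Fc 0 = ∅)
    (hlast : Fc (Fin.last (k + 1)) = Finset.univ)
    (hflat : ∀ j, (unifM (n + 1) (d + 1)).IsFlat ↑(Fc j)) :
    (¬ (∀ i : Fin (k + 1), (Fc i.castSucc).card = (i : ℕ)) →
        (∏ i : Fin (k + 1),
          betaInv (mMinor (unifM (n + 1) (d + 1)) ↑(Fc i.succ) ↑(Fc i.castSucc))) = 0) ∧
      ((∀ i : Fin (k + 1), (Fc i.castSucc).card = (i : ℕ)) →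
        (∏ i : Fin (k + 1),
          betaInv (mMinor (unifM (n + 1) (d + 1)) ↑(Fc i.succ) ↑(Fc i.castSucc))) =
          ((n - k - 1).choose (d - k) : ℤ)) := by
  have h := beta_prod_unif_general (isUniformOn_unifM (by omega)) Fc hmono hlast hflat
  simp only [h0, Finset.card_empty, Finset.card_univ, Fintype.card_fin, zero_add] at h
  refine ⟨fun hne => h.trans (if_neg hne), fun heq => (h.trans (if_pos heq)).trans ?_⟩
  congr 2 <;> omega
end
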